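/- arXiv:1311.2927 — 6 statements merged into one kernel-verified Lean document; each statement's English description precedes it below -/
import Mathlib

section
/- Let a, b, c be integers with gcd(a,b) = 1, a ≠ 0, b ≠ 0, and let (x₀, y₀) be a solution of the LDE a·x + b·y = c. Then an integer i forms a singleton connected component (i.e. i is neither a source nor a sink of the LDE) if and only if b does not divide (i - x₀) and a does not divide (i - y₀). -/
/-- An iteration `i` forms a singleton connected component (it is neither a
source nor a sink of the LDE `a*x + b*y = c`) iff `b ∤ (i - x₀)` and
`a ∤ (i - y₀)`. -/
theorem lde_singleton_component_iff (a b c x₀ y₀ : ℤ)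
    (hgcd : Int.gcd a b = 1) (ha : a ≠ 0) (hb : b ≠ 0)
    (h₀ : a * x₀ + b * y₀ = c) :
    ∀ i : ℤ,
      (¬ (∃ y : ℤ, a * i + b * y = c) ∧ ¬ (∃ y : ℤ, a * y + b * i = c)) ↔
      (¬ b ∣ (i - x₀) ∧ ¬ a ∣ (i - y₀)) := by
  intro i
  have hc : IsCoprime a b := Int.isCoprime_iff_gcd_eq_one.mpr hgcd
  have h1 : (∃ y : ℤ, a * i + b * y = c) ↔ b ∣ (i - x₀) := by
    constructor
    · rintro ⟨y, hy⟩
      exact hc.symm.dvd_of_dvd_mul_left ⟨y₀ - y, by linarith⟩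
    · rintro ⟨k, hk⟩
      refine ⟨y₀ - a * k, ?_⟩
      linear_combination h₀ + a * hk
  have h2 : (∃ y : ℤ, a * y + b * i = c) ↔ a ∣ (i - y₀) := by
    constructor
    · rintro ⟨y, hy⟩
      exact hc.dvd_of_dvd_mul_left ⟨x₀ - y, by linarith⟩
    · rintro ⟨k, hk⟩
      refine ⟨x₀ - b * k, ?_⟩
      linear_combination h₀ + b * hk
  rw [h1, h2]
end

section
/- Let a, b, c be integers with gcd(a,b) = 1, and let e_0, e_1, ..., e_l (with l ≥ 1) be a chain for the LDE a·x + b·y = c, i.e. a·e_k + b·e_{k+1} = c for all 0 ≤ k < l. Then b^(l-1) divides (e_1 - e_0). -/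
theorem lde_chain_aux (a b c : ℤ) (h : IsCoprime b a) (m : ℕ) :
    ∀ e : ℕ → ℤ, (∀ k < m + 1, a * e k + b * e (k + 1) = c) → b ^ m ∣ (e 1 - e 0) := by
  induction m with
  | zero => intro e _; simp
  | succ m ih =>
    intro e he
    obtain ⟨t, ht⟩ := ih (fun k => e (k + 1)) (fun k hk => he (k + 1) (by omega))
    have h0 := he 0 (by omega)
    have h1 := he 1 (by omega)
    norm_num at ht h0 h1
    apply (IsCoprime.pow_left (m := m + 1) h).dvd_of_dvd_mul_left
    refine ⟨-t, ?_⟩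
    rw [pow_succ]
    linear_combination h1 - h0 - b * ht

/-- If `e_0, e_1, ..., e_l` (with `l ≥ 1`) is a chain for the LDE
`a*x + b*y = c` with `gcd a b = 1`, then `b^(l-1)` divides `e_1 - e_0`. -/
theorem lde_chain_divisibility (a b c : ℤ)
    (hgcd : Int.gcd a b = 1) (l : ℕ) (hl : 1 ≤ l)
    (e : ℕ → ℤ) (hchain : ∀ k < l, a * e k + b * e (k + 1) = c) :
    b ^ (l - 1) ∣ (e 1 - e 0) := by
  apply lde_chain_aux a b c (Int.isCoprime_iff_gcd_eq_one.mpr hgcd).symm (l - 1) e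
  intro k hk
  exact hchain k (by omega)
end

section
/- Let a, b, c be integers with gcd(a,b) = 1, and let e_0, e_1, ..., e_l (with l ≥ 1) be a chain for the LDE a·x + b·y = c such that e_0 ≠ e_1 and every e_k lies in the interval [L, U]. Then |b|^(l-1) ≤ U - L. In particular, if |b| ≥ 2 then the length of any non-degenerate chain contained in [L, U] is at most log_{|b|}(U - L) + 1. -/
/-- Upper bound on the length of a non-degenerate chain contained in the
iteration range `[L, U]`: `|b|^(l-1) ≤ U - L`, and hence, when `|b| ≥ 2`,
`l ≤ log_{|b|} (U - L) + 1`. -/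
theorem lde_chain_length_bound (a b c : ℤ)
    (hgcd : Int.gcd a b = 1) (l : ℕ) (hl : 1 ≤ l)
    (e : ℕ → ℤ) (hchain : ∀ k < l, a * e k + b * e (k + 1) = c)
    (hne : e 0 ≠ e 1) (L U : ℤ)
    (hrange : ∀ k ≤ l, L ≤ e k ∧ e k ≤ U) :
    |b| ^ (l - 1) ≤ U - L ∧
    (2 ≤ |b| → (l : ℝ) ≤ Real.logb (|b| : ℝ) ((U : ℝ) - (L : ℝ)) + 1) := by
  have key : ∀ n, n < l → a ^ n * (e 1 - e 0) = (-b) ^ n * (e (n + 1) - e n) := by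
    intro n
    induction n with
    | zero => intro _; simp
    | succ n ih =>
      intro hn
      have h1 := ih (by omega)
      have h2 := hchain n (by omega)
      have h3 := hchain (n + 1) hn
      have h4 : a * (e (n + 1) - e n) = -b * (e (n + 1 + 1) - e (n + 1)) := by linarith
      calc a ^ (n + 1) * (e 1 - e 0) = a * (a ^ n * (e 1 - e 0)) := by ring
        _ = (-b) ^ n * (a * (e (n + 1) - e n)) := by rw [h1]; ring
        _ = _ := by rw [h4]; ring
  have hcop : IsCoprime ((-b) ^ (l - 1)) (a ^ (l - 1)) :=
    ((Int.isCoprime_iff_gcd_eq_one.mpr hgcd).symm.neg_left).pow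
  have hdvd : (-b) ^ (l - 1) ∣ e 1 - e 0 :=
    hcop.dvd_of_dvd_mul_left ⟨_, key (l - 1) (by omega)⟩
  have hpos : 0 < |e 1 - e 0| := abs_pos.mpr (sub_ne_zero.mpr hne.symm)
  have hle : |e 1 - e 0| ≤ U - L := by
    have h0 := hrange 0 (by omega)
    have h1 := hrange 1 hl
    rw [abs_le]
    constructor <;> linarith [h0.1, h0.2, h1.1, h1.2]
  have main : |b| ^ (l - 1) ≤ U - L := by
    have h := Int.le_of_dvd hpos ((abs_dvd_abs _ _).mpr hdvd)
    rw [abs_pow, abs_neg] at h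
    exact h.trans hle
  refine ⟨main, fun hb => ?_⟩
  have hb' : (2 : ℝ) ≤ |(b : ℝ)| := by exact_mod_cast hb
  have hUL : (0 : ℝ) < (U : ℝ) - L := by exact_mod_cast hpos.trans_le hle
  have hm : |(b : ℝ)| ^ (l - 1) ≤ (U : ℝ) - L := by exact_mod_cast main
  have h : ((l - 1 : ℕ) : ℝ) ≤ Real.logb |(b : ℝ)| ((U : ℝ) - L) := by
    rw [Real.le_logb_iff_rpow_le (by linarith) hUL, Real.rpow_natCast]
    exact hm
  rw [Nat.cast_sub hl] at h
  push_cast at h ⊢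
  linarith
end

section
/- Let a, b, c, α be integers with gcd(a,b) = 1, b ≠ 0 and (a + b)·α = c, and let l be a natural number. Then for an integer x there exists a chain e_0, e_1, ..., e_l for the LDE a·x + b·y = c with e_0 = x (i.e. integers e_0, ..., e_l with e_0 = x and a·e_k + b·e_{k+1} = c for all 0 ≤ k < l) if and only if b^l divides (x - α). -/
/-- A chain of length `l` for the LDE `a*x + b*y = c` starting at `x` exists
iff `b^l ∣ (x - α)`, where `α` is the fixed point with `(a + b) * α = c`. -/
theorem lde_chain_from_seed_iff (a b c α : ℤ)
    (hgcd : Int.gcd a b = 1) (hb : b ≠ 0)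
    (hα : (a + b) * α = c) (l : ℕ) (x : ℤ) :
    (∃ e : ℕ → ℤ, e 0 = x ∧ ∀ k < l, a * e k + b * e (k + 1) = c) ↔
      b ^ l ∣ (x - α) := by
  constructor
  · induction l generalizing x with
    | zero => intro _; simp
    | succ l ih =>
      rintro ⟨e, h0, he⟩
      obtain ⟨t, ht⟩ := ih (e 1) ⟨fun k => e (k + 1), rfl, fun k hk => he (k + 1) (by omega)⟩
      have h1 := he 0 (by omega)
      rw [h0, zero_add] at h1
      have hc : IsCoprime (b ^ (l + 1)) a := (Int.isCoprime_iff_gcd_eq_one.mpr hgcd).symm.pow_left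
      refine hc.dvd_of_dvd_mul_left ⟨-t, ?_⟩
      rw [pow_succ]
      linear_combination h1 - hα - b * ht
  · rintro ⟨t, ht⟩
    refine ⟨fun k => α + (-a) ^ k * b ^ (l - k) * t, ?_, ?_⟩
    · simp only [pow_zero, Nat.sub_zero]
      linear_combination -ht
    · intro k hk
      obtain ⟨m, rfl⟩ := Nat.exists_eq_add_of_lt hk
      have e1 : k + m + 1 - k = m + 1 := by omega
      have e2 : k + m + 1 - (k + 1) = m := by omega
      simp only [e1, e2, pow_succ]
      linear_combination hα
end

section
/- Let a, b, c be integers with gcd(a,b) = 1, a ≥ 1, |b| ≥ 2, and let (x₀, y₀) be a solution of the LDE a·x + b·y = c. Let L ≤ U be integers and R = U - L + 1. Then the number of integers x in [L, U] that are neither a source nor a sink of the LDE (i.e. b does not divide (x - x₀) and a does not divide (x - y₀)) is at least R - R/a - R/|b| - 2 (as real numbers). -/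
open scoped Classical in
lemma lde_aux (m v L U : ℤ) (hm : 0 < m) (hLU : L ≤ U) :
    (((Finset.Icc L U).filter (fun x => m ∣ x - v)).card : ℝ) ≤ ((U : ℝ) - L + 1) / m + 1 := by
  have hm' : (0 : ℝ) < m := by exact_mod_cast hm
  have h1 : ((Finset.Icc L U).filter (fun x => m ∣ x - v)).card ≤
      (Finset.Icc 0 ((U - L) / m)).card := by
    apply Finset.card_le_card_of_injOn (fun x => (x - L) / m)
    · intro x hx
      simp only [Finset.coe_filter, Finset.mem_Icc, Set.mem_ofPred_eq] at hx
      simp only [Finset.coe_Icc, Set.mem_Icc]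
      exact ⟨Int.ediv_nonneg (by omega) hm.le, Int.ediv_le_ediv hm (by omega)⟩
    · intro x hx y hy hxy
      simp only [Finset.coe_filter, Finset.mem_Icc, Set.mem_ofPred_eq] at hx hy
      have hd : m ∣ (x - L) - (y - L) := by
        have := dvd_sub hx.2 hy.2
        have e : (x - L) - (y - L) = (x - v) - (y - v) := by ring
        rw [e]; exact this
      have hmod : (y - L) % m = (x - L) % m := Int.modEq_iff_dvd.2 hd
      have e1 := Int.emod_add_mul_ediv (x - L) m
      have e2 := Int.emod_add_mul_ediv (y - L) m
      simp only at hxy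
      rw [hxy] at e1
      linarith
  have h0 : 0 ≤ (U - L) / m := Int.ediv_nonneg (by omega) hm.le
  have h2 : (((Finset.Icc 0 ((U - L) / m)).card : ℤ)) = (U - L) / m + 1 := by
    rw [Int.card_Icc]; omega
  have h3 : (((Finset.Icc 0 ((U - L) / m)).card : ℝ)) = (((U - L) / m : ℤ) : ℝ) + 1 := by
    exact_mod_cast h2
  have h4 : (((U - L) / m : ℤ) : ℝ) * m ≤ (U : ℝ) - L := by
    exact_mod_cast Int.ediv_mul_le (U - L) hm.ne'
  have h5 : (((U - L) / m : ℤ) : ℝ) ≤ ((U : ℝ) - L + 1) / m := by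
    rw [le_div_iff₀ hm']; linarith
  have h6 : (((Finset.Icc L U).filter (fun x => m ∣ x - v)).card : ℝ) ≤
      ((Finset.Icc 0 ((U - L) / m)).card : ℝ) := by exact_mod_cast h1
  linarith


open scoped Classical in
/-- Lower bound on the number of independent iterations (singleton connected
components) of the LDE `a*x + b*y = c` over the range `[L, U]` of size
`R = U - L + 1`: it is at least `R - R/a - R/|b| - 2`. -/
theorem lde_singleton_count_lower_bound (a b c x₀ y₀ : ℤ)
    (hgcd : Int.gcd a b = 1) (ha : 1 ≤ a) (hb : 2 ≤ |b|)
    (h₀ : a * x₀ + b * y₀ = c)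
    (L U : ℤ) (hLU : L ≤ U) :
    ((U : ℝ) - L + 1) - ((U : ℝ) - L + 1) / (a : ℝ)
        - ((U : ℝ) - L + 1) / |(b : ℝ)| - 2 ≤
      (((Finset.Icc L U).filter
          (fun x => ¬ (∃ y : ℤ, a * x + b * y = c) ∧
                    ¬ (∃ y : ℤ, a * y + b * x = c))).card : ℝ) := by
  have hco : IsCoprime a b := Int.isCoprime_iff_gcd_eq_one.2 hgcd
  have A := lde_aux a y₀ L U (by omega) hLU
  have B := lde_aux |b| x₀ L U (by omega) hLU
  push_cast at B
  have hsub : Finset.Icc L U ⊆ ((Finset.Icc L U).filter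
          (fun x => ¬ (∃ y : ℤ, a * x + b * y = c) ∧
                    ¬ (∃ y : ℤ, a * y + b * x = c))) ∪
      (((Finset.Icc L U).filter (fun x => a ∣ x - y₀)) ∪
       ((Finset.Icc L U).filter (fun x => |b| ∣ x - x₀))) := by
    intro x hx
    simp only [Finset.mem_union, Finset.mem_filter, hx, true_and]
    by_cases p : ∃ y : ℤ, a * x + b * y = c
    · obtain ⟨y, hy⟩ := p
      right; right
      rw [abs_dvd]
      exact hco.symm.dvd_of_dvd_mul_left ⟨y₀ - y, by linarith⟩
    · by_cases q : ∃ y : ℤ, a * y + b * x = c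
      · obtain ⟨y, hy⟩ := q
        right; left
        exact hco.dvd_of_dvd_mul_left ⟨x₀ - y, by linarith⟩
      · exact Or.inl ⟨p, q⟩
  have h1 := (Finset.card_le_card hsub).trans ((Finset.card_union_le _ _).trans
    (Nat.add_le_add_left (Finset.card_union_le _ _) _))
  have h2 : ((Finset.Icc L U).card : ℤ) = U - L + 1 := by
    rw [Int.card_Icc]; omega
  have h3 : ((Finset.Icc L U).card : ℝ) = (U : ℝ) - L + 1 := by exact_mod_cast h2
  have h4 := (Nat.cast_le (α := ℝ)).2 h1
  rw [h3] at h4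
  push_cast at h4
  linarith
end

section
/- Let a, b, c be integers with 0 < a < |b|, and let e_0, e_1, ..., e_l (with l ≥ 1) be a chain for the LDE a·x + b·y = c (i.e. a·e_k + b·e_{k+1} = c for all 0 ≤ k < l) such that e_l = e_0. Then every element of the chain is the fixed point: (a + b)·e_k = c for all 0 ≤ k ≤ l, and consequently e_0 = e_1 = ... = e_l. Hence the dependence graph of a normalized LDE with a < |b| contains no nontrivial cycles. -/
/-- A normalized LDE `a*x + b*y = c` with `0 < a < |b|` has no nontrivial
cyclic dependences: any chain that returns to its starting point consists
entirely of the fixed point, i.e. `(a + b) * e_k = c` and `e_k = e_0` for all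
`k ≤ l`. -/
theorem lde_no_nontrivial_cycles (a b c : ℤ) (ha : 0 < a) (hab : a < |b|)
    (l : ℕ) (hl : 1 ≤ l) (e : ℕ → ℤ)
    (hchain : ∀ k < l, a * e k + b * e (k + 1) = c)
    (hcycle : e l = e 0) :
    (∀ k ≤ l, (a + b) * e k = c) ∧ (∀ k ≤ l, e k = e 0) := by
  have hs : a + b ≠ 0 := by
    intro h
    have hb : b = -a := by linarith
    rw [hb, abs_neg, abs_of_pos ha] at hab
    exact lt_irrefl _ hab
  have hstep : ∀ k < l, b * ((a + b) * e (k + 1) - c) = -a * ((a + b) * e k - c) := by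
    intro k hk
    have h := hchain k hk
    linear_combination (a + b) * h
  have hpow : ∀ k ≤ l, b ^ k * ((a + b) * e k - c) = (-a) ^ k * ((a + b) * e 0 - c) := by
    intro k
    induction k with
    | zero => intro _; simp
    | succ k ih =>
      intro hk
      have h1 := ih (by omega)
      have h2 := hstep k (by omega)
      rw [pow_succ, pow_succ]
      linear_combination b ^ k * h2 + (-a) * h1
  have hb0 : b ≠ 0 := by
    rintro rfl
    simp at hab
    omega
  have hd0 : (a + b) * e 0 - c = 0 := by
    by_contra hne
    have h := hpow l le_rfl
    rw [hcycle] at h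
    have h3 := mul_right_cancel₀ hne h
    have h4 := congrArg abs h3
    rw [abs_pow, abs_pow, abs_neg, abs_of_pos ha] at h4
    have h5 : a ^ l < |b| ^ l := pow_lt_pow_left₀ hab ha.le (by omega)
    omega
  have hall : ∀ k ≤ l, (a + b) * e k = c := by
    intro k hk
    have h := hpow k hk
    rw [hd0, mul_zero] at h
    have h6 := (mul_eq_zero.mp h).resolve_left (pow_ne_zero k hb0)
    linarith
  refine ⟨hall, fun k hk => mul_left_cancel₀ hs ?_⟩
  rw [hall k hk, hall 0 (Nat.zero_le _)]
end
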